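/- Let α, β, γ ∈ ℂ with none of α, β, γ a nonpositive integer, and let k ∈ (0,1). Define f̃_{m,n} as in the context, with the conventions f̃_{−1,ℓ} := 0 and f̃_{m,n} := 0 for m > n. Then for every n ≥ 1 and every m with 1 ≤ m ≤ n: f̃_{m,n} − f̃_{m,n−1} = −( (n−1)!·(α)_{n−1} / ((β)_n·(γ)_n) ) · Σ_{ℓ=m−1}^{n−1} ( (β)_ℓ·(γ)_ℓ / (ℓ!·(α)_ℓ) ) · k^{2(n−1−ℓ)} · f̃_{m−1,ℓ}. -/

import Mathlib

/-- The Pochhammer symbol `(x)_n = x(x+1)⋯(x+n-1)`. -/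
noncomputable def poch (x : ℂ) (n : ℕ) : ℂ := ∏ i ∈ Finset.range n, (x + (i : ℂ))

/-- The index set of tuples `(ℓ_1, j_1, …, ℓ_m, j_m)` with
`0 ≤ ℓ_1 ≤ j_1 < ℓ_2 ≤ j_2 < ⋯ < ℓ_m ≤ j_m < n`, encoded as pairs of functions
`(ℓ, j) : (Fin m → Fin n) × (Fin m → Fin n)`. -/
def heunIdx (m n : ℕ) : Finset ((Fin m → Fin n) × (Fin m → Fin n)) :=
  Finset.univ.filter fun p =>
    (∀ s : Fin m, (p.1 s : ℕ) ≤ (p.2 s : ℕ)) ∧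
    (∀ s t : Fin m, (s : ℕ) + 1 = (t : ℕ) → (p.2 s : ℕ) < (p.1 t : ℕ))

/-- The coefficients `f̃_{m,n}` for the case `δ = β + 1`: `f̃_{0,n} = 1`; for
`1 ≤ m ≤ n`, `f̃_{m,n} = (-1)^m Σ ∏_{s=1}^m [j_s!(α)_{j_s}(β)_{ℓ_s}(γ)_{ℓ_s} /
(ℓ_s!(α)_{ℓ_s}(β)_{j_s+1}(γ)_{j_s+1})] k^{2(j_s-ℓ_s)}`, the sum running over
`heunIdx m n`; and `f̃_{m,n} = 0` for `m < 0` or `m > n`. -/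
noncomputable def heunft (k : ℝ) (α β γ : ℂ) (m : ℤ) (n : ℕ) : ℂ :=
  if m = 0 then 1
  else if m < 0 ∨ (n : ℤ) < m then 0
  else (-1 : ℂ) ^ m.toNat *
    ∑ p ∈ heunIdx m.toNat n, ∏ s : Fin m.toNat,
      ((Nat.factorial (p.2 s : ℕ) : ℂ) * poch α (p.2 s : ℕ) * poch β (p.1 s : ℕ) *
          poch γ (p.1 s : ℕ)) /
        ((Nat.factorial (p.1 s : ℕ) : ℂ) * poch α (p.1 s : ℕ) * poch β ((p.2 s : ℕ) + 1) *
          poch γ ((p.2 s : ℕ) + 1)) *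
      (k : ℂ) ^ ((2 : ℤ) * (((p.2 s : ℕ) : ℤ) - ((p.1 s : ℕ) : ℤ)))

/-- The Taylor coefficients `c̃_n = ((β)_n / n!) Σ_{m=0}^n f̃_{m,n} wᵐ` of the local
Heun solution for `δ = β + 1`. -/
noncomputable def heunct (k : ℝ) (α β γ w : ℂ) (n : ℕ) : ℂ :=
  poch β n / (Nat.factorial n : ℂ) *
    ∑ m ∈ Finset.range (n + 1), heunft k α β γ (m : ℤ) n * w ^ m

/-!
The intervals `[ℓ_s, j_s]` of an index tuple are disjoint and increasing, so the tuples of length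
`m + 1` below `n` are obtained by choosing the last interval `[l, j]` with `j < n` and then a tuple
of length `m` below `l`. The weight of a tuple is the product of the weights of its intervals.
Hence passing from `n` to `n + 1` adds exactly the tuples with `j_{m+1} = n`, whose total weight is
`∑ l ≤ n, w(l, n) · (sum of length m below l)`, and `w(l, n)` factors into the terms of the
identity. The sum starts at `l = m` because no `m` disjoint nonempty intervals fit below `l < m`.
-/

section IntervalChains

/-- The chains of `m` successive disjoint intervals `[ℓ_1, j_1], …, [ℓ_m, j_m]` of natural numbers
below `n`, each encoded by its pair of endpoints. This is `heunIdx` with values in `ℕ`, so that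
chains with different bounds can be compared, and with `j_s < ℓ_t` required for all `s < t`. -/
def intervalChains (m n : ℕ) : Finset (Fin m → ℕ × ℕ) :=
  {p ∈ Fintype.piFinset fun _ => Finset.range n ×ˢ Finset.range n |
    (∀ s, (p s).1 ≤ (p s).2) ∧ ∀ s t, s < t → (p s).2 < (p t).1}

theorem mem_intervalChains {m n : ℕ} {p : Fin m → ℕ × ℕ} :
    p ∈ intervalChains m n ↔
      (∀ s, (p s).2 < n) ∧ (∀ s, (p s).1 ≤ (p s).2) ∧ ∀ s t, s < t → (p s).2 < (p t).1 := by
  simp only [intervalChains, Finset.mem_filter, Fintype.mem_piFinset, Finset.mem_product,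
    Finset.mem_range, forall_and, and_congr_left_iff, and_iff_right_iff_imp]
  exact fun h hn s => (h.1 s).trans_lt (hn s)

theorem snoc_mem_intervalChains {m n l j : ℕ} {q : Fin m → ℕ × ℕ} :
    (Fin.snoc q (l, j) : Fin (m + 1) → ℕ × ℕ) ∈ intervalChains (m + 1) n ↔
      j < n ∧ l ≤ j ∧ q ∈ intervalChains m l := by
  simp only [mem_intervalChains, Fin.forall_fin_succ', Fin.snoc_castSucc, Fin.snoc_last,
    Fin.castSucc_lt_castSucc_iff, Fin.castSucc_lt_last, forall_const, lt_irrefl, IsEmpty.forall_iff,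
    Fin.not_lt.2 (Fin.le_last _), implies_true, and_true, forall_and]
  constructor
  · rintro ⟨⟨-, hj⟩, ⟨hle, hlj⟩, hlt, hl⟩
    exact ⟨hj, hlj, hl, hle, hlt⟩
  · rintro ⟨hj, hlj, hl, hle, hlt⟩
    exact ⟨⟨fun s => (hl s).trans (hlj.trans_lt hj), hj⟩, ⟨hle, hlj⟩, hlt, hl⟩

theorem right_lt_left_of_forall_succ {ι : Type*} [Preorder ι] {m : ℕ} {l j : Fin m → ι}
    (hle : ∀ s, l s ≤ j s) (hlt : ∀ s t : Fin m, (s : ℕ) + 1 = t → j s < l t)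
    {s t : Fin m} (hst : s < t) : j s < l t := by
  obtain _ | m := m
  · exact s.elim0
  have hmono : Monotone l := Fin.monotone_iff_le_succ.2 fun i =>
    (hle _).trans (hlt i.castSucc i.succ (by simp)).le
  have hsm : (s : ℕ) + 1 < m + 1 := by lia
  exact (hlt s ⟨s + 1, hsm⟩ rfl).trans_le (hmono (Nat.succ_le_of_lt hst))

variable {R : Type*} [CommSemiring R]

/-- The sum over all chains of `m` intervals below `n` of the product of the interval weights
`w ℓ_s j_s`; up to sign, `f̃_{m,n}` is of this form. -/
def intervalChainSum (w : ℕ → ℕ → R) (m n : ℕ) : R :=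
  ∑ p ∈ intervalChains m n, ∏ s, w (p s).1 (p s).2

theorem intervalChainSum_zero (w : ℕ → ℕ → R) (n : ℕ) : intervalChainSum w 0 n = 1 := by
  have huniv : intervalChains 0 n = Finset.univ :=
    Finset.eq_univ_of_forall fun p => by simp [mem_intervalChains]
  simp [intervalChainSum, huniv]

theorem intervalChainSum_succ (w : ℕ → ℕ → R) (m n : ℕ) :
    intervalChainSum w (m + 1) n =
      ∑ j ∈ Finset.range n, ∑ l ∈ Finset.range (j + 1), w l j * intervalChainSum w m l := by
  simp only [intervalChainSum, Finset.mul_sum, Finset.sum_sigma']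
  refine Finset.sum_bij'
    (fun p _ => ⟨(p (Fin.last m)).2, (p (Fin.last m)).1, Fin.init p⟩)
    (fun x _ => Fin.snoc x.2.2 (x.2.1, x.1)) ?_ ?_ ?_ ?_ ?_
  · intro p hp
    rw [← Fin.snoc_init_self p, snoc_mem_intervalChains] at hp
    simpa [Nat.lt_succ_iff] using hp
  · intro x hx
    simpa [snoc_mem_intervalChains, Nat.lt_succ_iff] using hx
  · intro p _
    exact Fin.snoc_init_self p
  · rintro ⟨j, l, q⟩ _
    simp
  · intro p _
    rw [Fin.prod_univ_castSucc, mul_comm]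
    rfl

theorem intervalChainSum_eq_zero_of_lt (w : ℕ → ℕ → R) {m n : ℕ} (h : n < m) :
    intervalChainSum w m n = 0 := by
  induction m generalizing n with
  | zero => exact absurd h n.not_lt_zero
  | succ m ih =>
    rw [intervalChainSum_succ]
    refine Finset.sum_eq_zero fun j hj => Finset.sum_eq_zero fun l hl => ?_
    rw [Finset.mem_range] at hj hl
    rw [ih (by lia), mul_zero]

theorem intervalChainSum_succ_succ (w : ℕ → ℕ → R) (m n : ℕ) :
    intervalChainSum w (m + 1) (n + 1) =
      intervalChainSum w (m + 1) n + ∑ l ∈ Finset.Icc m n, w l n * intervalChainSum w m l := by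
  have hIcc : ∑ l ∈ Finset.Icc m n, w l n * intervalChainSum w m l =
      ∑ l ∈ Finset.range (n + 1), w l n * intervalChainSum w m l := by
    refine Finset.sum_subset (fun l hl => by grind) fun l hl hl' => ?_
    rw [intervalChainSum_eq_zero_of_lt w (by grind), mul_zero]
  rw [hIcc, intervalChainSum_succ, intervalChainSum_succ, Finset.sum_range_succ]

theorem sum_heunIdx_eq_intervalChainSum (w : ℕ → ℕ → R) (m n : ℕ) :
    ∑ p ∈ heunIdx m n, ∏ s, w (p.1 s) (p.2 s) = intervalChainSum w m n := by
  refine Finset.sum_nbij (fun p s => ((p.1 s : ℕ), (p.2 s : ℕ))) ?_ ?_ ?_ fun _ _ => rfl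
  · intro p hp
    obtain ⟨hle, hlt⟩ := (Finset.mem_filter.1 hp).2
    exact mem_intervalChains.2
      ⟨fun s => (p.2 s).isLt, hle, fun _ _ => right_lt_left_of_forall_succ hle hlt⟩
  · intro p _ q _ hpq
    simp only [funext_iff, Prod.mk.injEq, Fin.val_inj, forall_and] at hpq
    exact Prod.ext (funext hpq.1) (funext hpq.2)
  · intro q hq
    obtain ⟨hn, hle, hlt⟩ := mem_intervalChains.1 hq
    refine ⟨(fun s => ⟨(q s).1, (hle s).trans_lt (hn s)⟩, fun s => ⟨(q s).2, hn s⟩), ?_, rfl⟩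
    exact Finset.mem_filter.2
      ⟨Finset.mem_univ _, hle, fun s t hst => hlt s t (Fin.lt_def.2 (by lia))⟩

end IntervalChains

/-- The factor `j!(α)_j(β)_l(γ)_l / (l!(α)_l(β)_{j+1}(γ)_{j+1}) k^{2(j-l)}` which the interval
`[l, j]` contributes to a summand of `f̃_{m,n}`. -/
noncomputable def heunWeight (k : ℝ) (α β γ : ℂ) (l j : ℕ) : ℂ :=
  ((Nat.factorial j : ℂ) * poch α j * poch β l * poch γ l) /
    ((Nat.factorial l : ℂ) * poch α l * poch β (j + 1) * poch γ (j + 1)) *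
  (k : ℂ) ^ ((2 : ℤ) * ((j : ℤ) - (l : ℤ)))

theorem heunWeight_eq_mul (k : ℝ) (α β γ : ℂ) {l j : ℕ} (hlj : l ≤ j) :
    heunWeight k α β γ l j =
      (Nat.factorial j : ℂ) * poch α j / (poch β (j + 1) * poch γ (j + 1)) *
        (poch β l * poch γ l / ((Nat.factorial l : ℂ) * poch α l) * (k : ℂ) ^ (2 * (j - l))) := by
  have hpow : (k : ℂ) ^ ((2 : ℤ) * ((j : ℤ) - (l : ℤ))) = (k : ℂ) ^ (2 * (j - l)) := by
    rw [← zpow_natCast]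
    push_cast [hlj]
    rfl
  rw [heunWeight, hpow]
  ring

theorem heunft_natCast (k : ℝ) (α β γ : ℂ) (m n : ℕ) :
    heunft k α β γ m n = (-1) ^ m * intervalChainSum (heunWeight k α β γ) m n := by
  unfold heunft
  split_ifs with hzero hlt
  · obtain rfl : m = 0 := by exact_mod_cast hzero
    simp [intervalChainSum_zero]
  · rw [intervalChainSum_eq_zero_of_lt _ (by lia), mul_zero]
  · rw [← sum_heunIdx_eq_intervalChainSum]
    rfl

theorem heunft_difference_identity_general (k : ℝ) (α β γ : ℂ)
    (_hα : ∀ j : ℕ, α ≠ -(j : ℂ)) (_hβ : ∀ j : ℕ, β ≠ -(j : ℂ))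
    (_hγ : ∀ j : ℕ, γ ≠ -(j : ℂ)) {n m : ℕ} (hn : 1 ≤ n) (hm : 1 ≤ m) :
    heunft k α β γ (m : ℤ) n - heunft k α β γ (m : ℤ) (n - 1) =
      -(((Nat.factorial (n - 1) : ℂ) * poch α (n - 1)) / (poch β n * poch γ n)) *
        ∑ ℓ ∈ Finset.Icc (m - 1) (n - 1),
          poch β ℓ * poch γ ℓ / ((Nat.factorial ℓ : ℂ) * poch α ℓ) *
            (k : ℂ) ^ (2 * (n - 1 - ℓ)) *
            heunft k α β γ ((m : ℤ) - 1) ℓ := by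
  obtain ⟨n, rfl⟩ := Nat.exists_eq_add_of_le' hn
  obtain ⟨m, rfl⟩ := Nat.exists_eq_add_of_le' hm
  have hpred : ((m + 1 : ℕ) : ℤ) - 1 = m := by simp
  simp only [hpred, heunft_natCast, Nat.add_sub_cancel]
  rw [intervalChainSum_succ_succ, mul_add, add_sub_cancel_left, Finset.mul_sum, Finset.mul_sum]
  refine Finset.sum_congr rfl fun l hl => ?_
  rw [heunWeight_eq_mul k α β γ (Finset.mem_Icc.1 hl).2]
  ring

/-- The difference identity `f̃_{m,n} - f̃_{m,n-1} =
-((n-1)!(α)_{n-1}/((β)_n(γ)_n)) Σ_{ℓ=m-1}^{n-1}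
((β)_ℓ(γ)_ℓ/(ℓ!(α)_ℓ)) k^{2(n-1-ℓ)} f̃_{m-1,ℓ}` for `n ≥ 1` and `1 ≤ m ≤ n`. -/
theorem heunft_difference_identity (k : ℝ) (hk0 : 0 < k) (hk1 : k < 1)
    (α β γ : ℂ)
    (hα : ∀ j : ℕ, α ≠ -(j : ℂ)) (hβ : ∀ j : ℕ, β ≠ -(j : ℂ))
    (hγ : ∀ j : ℕ, γ ≠ -(j : ℂ)) :
    ∀ n : ℕ, 1 ≤ n → ∀ m : ℕ, 1 ≤ m → m ≤ n →
      heunft k α β γ (m : ℤ) n - heunft k α β γ (m : ℤ) (n - 1) =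
      -(((Nat.factorial (n - 1) : ℂ) * poch α (n - 1)) / (poch β n * poch γ n)) *
        ∑ ℓ ∈ Finset.Icc (m - 1) (n - 1),
          poch β ℓ * poch γ ℓ / ((Nat.factorial ℓ : ℂ) * poch α ℓ) *
            (k : ℂ) ^ (2 * (n - 1 - ℓ)) *
            heunft k α β γ ((m : ℤ) - 1) ℓ := by
  intro n hn m hm _
  exact heunft_difference_identity_general k α β γ hα hβ hγ hn hm
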